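/- arXiv:1202.0685 — 4 statements merged into one kernel-verified Lean document; each statement's English description precedes it below -/
import Mathlib

section
/- Let u, v : ℝ² × [0,T] → ℝ and S : ℝ² × [0,T] → Matrix (Fin 2) (Fin 2) ℝ be C² maps with S symmetric-valued, and let P : ℝ × [0,T] → ℝ be continuous. Let φ = (x, y) : ℝ² × [0,T] → ℝ² be a C² flow map: ∂φ/∂t(ξ,t) = (u, v)(φ(ξ,t), t) and φ(ξ,0) = ξ, and assume the deformation gradient F(ξ,t) = D_ξφ(ξ,t) satisfies det F(ξ,t) = 1 and F(ξ,t) is invertible for all (ξ,t). Assume the momentum equation ∂u/∂t + u ∂u/∂x + v ∂u/∂y = ∂S₁₁/∂x + ∂S₁₂/∂y − P(x,t) and the constitutive equation ∂S/∂t + u ∂S/∂x + v ∂S/∂y − (∇v)S − S(∇v)ᵀ = 0 hold on ℝ² × [0,T], where (∇v)ᵢⱼ = ∂(u,v)ᵢ/∂xⱼ. Define C(ξ) := S(ξ, 0). Then for all (ξ,t): ∂²x/∂t²(ξ₁,ξ₂,t) = Σ_{i,j=1}^{2} ∂/∂ξᵢ ( C_{ji}(ξ) ∂x/∂ξⱼ(ξ,t)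 ) − P(x(ξ,t), t). -/
open Matrix Set

/-!
Along particle paths the deformation gradient satisfies `F' = L F` with `L` the velocity gradient
(symmetry of second derivatives), and the constitutive equation reads `S' = L S + S Lᵀ`. Hence
`F⁻¹ S F⁻ᵀ` keeps its initial value `C`, that is, `S = F C Fᵀ` along the flow. As `det F = 1`, the
Piola transform turns the Eulerian divergence of the first row of `S` into the Lagrangian divergence
of the first row of `F C`, whose entries are `∑ⱼ C_{ji} ∂x/∂ξⱼ`. The acceleration `x_tt` is the
material derivative of `u`, so the momentum equation becomes the claimed wave equation.
-/

section DirectionalDerivatives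

variable {E F : Type*} [NormedAddCommGroup E] [NormedSpace ℝ E]
  [NormedAddCommGroup F] [NormedSpace ℝ F]

theorem differentiable_fderiv_apply {f : E → F} (hf : ContDiff ℝ 2 f) (v : E) :
    Differentiable ℝ fun p => fderiv ℝ f p v :=
  ((hf.fderiv_right (m := 1) (by norm_num)).differentiable (by norm_num)).clm_apply
    (differentiable_const v)

theorem fderiv_fderiv_apply_comm {f : E → F} (hf : ContDiff ℝ 2 f) (p v w : E) :
    fderiv ℝ (fun q => fderiv ℝ f q v) p w = fderiv ℝ (fun q => fderiv ℝ f q w) p v := by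
  have hdf : DifferentiableAt ℝ (fderiv ℝ f) p :=
    (hf.fderiv_right (m := 1) (by norm_num)).differentiable (by norm_num) p
  have hsymm : IsSymmSndFDerivAt ℝ f p := hf.contDiffAt.isSymmSndFDerivAt (by simp)
  simp [fderiv_clm_apply hdf (differentiableAt_const _), hsymm.eq v w]

theorem hasFDerivAt_slice {f : E × ℝ → F} {p : E} {t : ℝ} (hf : DifferentiableAt ℝ f (p, t)) :
    HasFDerivAt (fun q => f (q, t)) (fderiv ℝ f (p, t) ∘L .inl ℝ E ℝ) p :=
  hf.hasFDerivAt.comp p (hasFDerivAt_prodMk_left p t)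

theorem hasDerivAt_along_curve {f : E × ℝ → F} {c : ℝ → E} {c' : E} {t : ℝ}
    (hf : DifferentiableAt ℝ f (c t, t)) (hc : HasDerivAt c c' t) :
    HasDerivAt (fun τ => f (c τ, τ)) (fderiv ℝ f (c t, t) (c', 1)) t :=
  HasFDerivAt.comp_hasDerivAt (f := fun τ => (c τ, τ)) t hf.hasFDerivAt
    (hc.prodMk (hasDerivAt_id t))

theorem hasDerivAt_time {f : E × ℝ → F} {p : E} {t : ℝ} (hf : DifferentiableAt ℝ f (p, t)) :
    HasDerivAt (fun τ => f (p, τ)) (fderiv ℝ f (p, t) (0, 1)) t :=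
  hasDerivAt_along_curve hf (hasDerivAt_const t p)

end DirectionalDerivatives

section PartialDerivatives

variable {ι κ E : Type*} [DecidableEq ι] [NormedAddCommGroup E] [NormedSpace ℝ E]

/-- The partial derivative `∂f/∂ξⱼ`, as the one-variable derivative of `f` in its `j`-th coordinate
with the others frozen, so that for explicit coordinates it unfolds to a plain `deriv`. -/
noncomputable def partialDeriv (j : ι) (f : (ι → ℝ) → E) (ξ : ι → ℝ) : E :=
  deriv (fun s => f (Function.update ξ j s)) (ξ j)

/-- The Jacobian matrix of `f`, with entry `∂fᵢ/∂ξⱼ` in row `i` and column `j`: the deformation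
gradient when `f` is a flow map, the velocity gradient when `f` is a velocity field. -/
noncomputable def jacobian (f : (ι → ℝ) → κ → ℝ) (ξ : ι → ℝ) : Matrix κ ι ℝ :=
  of fun i j => partialDeriv j (fun η => f η i) ξ

/-- The divergence `∑ᵢ ∂aᵢ/∂ξᵢ` of a vector field. -/
noncomputable def divergence [Fintype ι] (a : (ι → ℝ) → ι → ℝ) (ξ : ι → ℝ) : ℝ :=
  (jacobian a ξ).trace

/-- The material derivative `∂f/∂t + (w · ∇) f` of a field `f` of position and time, that is, its
rate of change along the trajectories of the velocity field `w`. -/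
noncomputable def materialDeriv [Fintype ι] (w : (ι → ℝ) × ℝ → ι → ℝ) (f : (ι → ℝ) × ℝ → E)
    (y : ι → ℝ) (t : ℝ) : E :=
  deriv (fun τ => f (y, τ)) t + ∑ k, w (y, t) k • partialDeriv k (fun z => f (z, t)) y

theorem jacobian_id (ξ : ι → ℝ) : jacobian (fun η : ι → ℝ => η) ξ = 1 := by
  ext i j
  refine (hasDerivAt_pi.1 (hasDerivAt_update ξ j (ξ j)) i).deriv.trans ?_
  rw [one_apply, Pi.single_apply]

section Finite

variable [Finite ι]

theorem hasDerivAt_comp_update {f : (ι → ℝ) → E} {ξ : ι → ℝ} (hf : DifferentiableAt ℝ f ξ)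
    (j : ι) : HasDerivAt (fun s => f (Function.update ξ j s)) (partialDeriv j f ξ) (ξ j) := by
  have := Fintype.ofFinite ι
  rw [← Function.update_eq_self j ξ] at hf
  exact (hf.comp (ξ j) (hasDerivAt_update ξ j (ξ j)).differentiableAt).hasDerivAt

theorem partialDeriv_eq_fderiv {f : (ι → ℝ) → E} {ξ : ι → ℝ} (hf : DifferentiableAt ℝ f ξ)
    (j : ι) : partialDeriv j f ξ = fderiv ℝ f ξ (Pi.single j 1) := by
  have := Fintype.ofFinite ι
  have hf' : HasFDerivAt f (fderiv ℝ f ξ) (Function.update ξ j (ξ j)) := by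
    rw [Function.update_eq_self]
    exact hf.hasFDerivAt
  exact (hf'.comp_hasDerivAt (ξ j) (hasDerivAt_update ξ j (ξ j))).deriv

theorem partialDeriv_slice {f : (ι → ℝ) × ℝ → E} {ξ : ι → ℝ} {t : ℝ}
    (hf : DifferentiableAt ℝ f (ξ, t)) (j : ι) :
    partialDeriv j (fun η => f (η, t)) ξ = fderiv ℝ f (ξ, t) (Pi.single j 1, 0) := by
  have := Fintype.ofFinite ι
  have hslice := hasFDerivAt_slice hf
  simp [partialDeriv_eq_fderiv hslice.differentiableAt, hslice.fderiv]

theorem fderiv_apply_eq_sum_partialDeriv [Fintype κ] [DecidableEq κ]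
    {f : (κ → ℝ) → E} {y : κ → ℝ} (hf : DifferentiableAt ℝ f y) (c : κ → ℝ) :
    fderiv ℝ f y c = ∑ k, c k • partialDeriv k f y := by
  conv_lhs => rw [pi_eq_sum_univ' c]
  simp [partialDeriv_eq_fderiv hf]

theorem partialDeriv_comp [Fintype κ] [DecidableEq κ] {g : (κ → ℝ) → E} {f : (ι → ℝ) → κ → ℝ}
    {ξ : ι → ℝ} (hg : DifferentiableAt ℝ g (f ξ)) (hf : DifferentiableAt ℝ f ξ) (j : ι) :
    partialDeriv j (fun η => g (f η)) ξ = ∑ k, jacobian f ξ k j • partialDeriv k g (f ξ) := by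
  have := Fintype.ofFinite ι
  have hcol : partialDeriv j f ξ = fun k => jacobian f ξ k j :=
    funext fun k => (hasDerivAt_pi.1 (hasDerivAt_comp_update hf j) k).deriv.symm
  have hchain : HasFDerivAt (fun η => g (f η)) (fderiv ℝ g (f ξ) ∘L fderiv ℝ f ξ) ξ :=
    hg.hasFDerivAt.comp ξ hf.hasFDerivAt
  rw [partialDeriv_eq_fderiv hchain.differentiableAt, hchain.fderiv,
    ContinuousLinearMap.comp_apply, ← partialDeriv_eq_fderiv hf, hcol,
    fderiv_apply_eq_sum_partialDeriv hg]

theorem jacobian_comp {μ : Type*} [Fintype κ] [DecidableEq κ] {g : (κ → ℝ) → μ → ℝ}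
    {f : (ι → ℝ) → κ → ℝ} {ξ : ι → ℝ} (hg : ∀ i, DifferentiableAt ℝ (fun y => g y i) (f ξ))
    (hf : DifferentiableAt ℝ f ξ) :
    jacobian (fun η => g (f η)) ξ = jacobian g (f ξ) * jacobian f ξ := by
  ext i j
  simp only [mul_apply]
  refine (partialDeriv_comp (hg i) hf j).trans ?_
  exact Finset.sum_congr rfl fun k _ => mul_comm _ _

end Finite

variable [Fintype ι]

theorem differentiable_partialDeriv {f : (ι → ℝ) → E} (hf : ContDiff ℝ 2 f) (j : ι) :
    Differentiable ℝ (partialDeriv j f) := by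
  have h : partialDeriv j f = fun ξ => fderiv ℝ f ξ (Pi.single j 1) :=
    funext fun ξ => partialDeriv_eq_fderiv (hf.differentiable two_ne_zero ξ) j
  exact h ▸ differentiable_fderiv_apply hf _

theorem partialDeriv_comm {f : (ι → ℝ) → E} (hf : ContDiff ℝ 2 f) (j k : ι) (ξ : ι → ℝ) :
    partialDeriv j (partialDeriv k f) ξ = partialDeriv k (partialDeriv j f) ξ := by
  have h (i : ι) : partialDeriv i f = fun η => fderiv ℝ f η (Pi.single i 1) :=
    funext fun η => partialDeriv_eq_fderiv (hf.differentiable two_ne_zero η) i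
  rw [partialDeriv_eq_fderiv (differentiable_partialDeriv hf k ξ),
    partialDeriv_eq_fderiv (differentiable_partialDeriv hf j ξ), h, h,
    fderiv_fderiv_apply_comm hf]

theorem hasDerivAt_partialDeriv_slice {f : (ι → ℝ) × ℝ → E} (hf : ContDiff ℝ 2 f) (j : ι)
    (ξ : ι → ℝ) (t : ℝ) :
    HasDerivAt (fun τ => partialDeriv j (fun η => f (η, τ)) ξ)
      (partialDeriv j (fun η => deriv (fun τ => f (η, τ)) t) ξ) t := by
  have hdf : Differentiable ℝ f := hf.differentiable two_ne_zero
  have hddf (v : (ι → ℝ) × ℝ) : Differentiable ℝ fun p => fderiv ℝ f p v :=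
    differentiable_fderiv_apply hf v
  simp only [partialDeriv_slice (hdf _), (hasDerivAt_time (hdf _)).deriv]
  rw [partialDeriv_slice (hddf (0, 1) _), fderiv_fderiv_apply_comm hf]
  exact hasDerivAt_time (hddf _ _)

theorem hasDerivAt_comp_trajectory {w : (ι → ℝ) × ℝ → ι → ℝ} {f : (ι → ℝ) × ℝ → E}
    {c : ℝ → ι → ℝ} {t : ℝ} (hf : DifferentiableAt ℝ f (c t, t))
    (hc : HasDerivAt c (w (c t, t)) t) :
    HasDerivAt (fun τ => f (c τ, τ)) (materialDeriv w f (c t) t) t := by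
  have hslice := hasFDerivAt_slice hf
  refine (hasDerivAt_along_curve hf hc).congr_deriv ?_
  rw [materialDeriv, (hasDerivAt_time hf).deriv,
    ← fderiv_apply_eq_sum_partialDeriv hslice.differentiableAt, hslice.fderiv,
    ContinuousLinearMap.comp_apply, ← map_add]
  simp

end PartialDerivatives

section JacobiFormula

theorem det_updateRow_eq_sum_adjugate {n R : Type*} [Fintype n] [DecidableEq n] [CommRing R]
    (A : Matrix n n R) (i : n) (b : n → R) :
    (A.updateRow i b).det = ∑ j, adjugate A j i * b j := by
  rw [← cramer_transpose_apply, cramer_eq_adjugate_mulVec, ← adjugate_transpose]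
  rfl

theorem hasDerivAt_det {n : Type*} [Fintype n] [DecidableEq n] {A : ℝ → Matrix n n ℝ}
    {A' : Matrix n n ℝ} {t : ℝ} (hA : ∀ i j, HasDerivAt (fun τ => A τ i j) (A' i j) t) :
    HasDerivAt (fun τ => (A τ).det) (trace (adjugate (A t) * A')) t := by
  let D : ContinuousMultilinearMap ℝ (fun _ : n => n → ℝ) ℝ :=
    ⟨detRowAlternating.toMultilinearMap, continuous_id.matrix_det⟩
  have hrows : HasDerivAt (fun τ i => A τ i) (fun i => A' i) t :=
    hasDerivAt_pi.2 fun i => hasDerivAt_pi.2 (hA i)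
  have hsum : D.linearDeriv (fun i => A t i) (fun i => A' i) = trace (adjugate (A t) * A') := by
    rw [ContinuousMultilinearMap.linearDeriv_apply]
    simp only [trace, diag, mul_apply]
    rw [Finset.sum_comm]
    exact Finset.sum_congr rfl fun i _ => det_updateRow_eq_sum_adjugate (A t) i (A' i)
  exact hsum ▸ (D.hasFDerivAt _).comp_hasDerivAt t hrows

end JacobiFormula

section Piola

variable {ι : Type*} [Fintype ι] [DecidableEq ι]

theorem differentiable_jacobian_apply {κ : Type*} [Fintype κ] {φ : (ι → ℝ) → κ → ℝ}
    (hφ : ContDiff ℝ 2 φ) (i : κ) (j : ι) :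
    Differentiable ℝ fun ξ => jacobian φ ξ i j :=
  differentiable_partialDeriv (contDiff_pi.1 hφ i) j

theorem hasDerivAt_det_jacobian_comp_update {φ : (ι → ℝ) → ι → ℝ} (hφ : ContDiff ℝ 2 φ)
    (j : ι) (ξ : ι → ℝ) :
    HasDerivAt (fun s => (jacobian φ (Function.update ξ j s)).det)
      (trace (adjugate (jacobian φ ξ) * of fun k l => partialDeriv j (fun η => jacobian φ η k l) ξ))
      (ξ j) := by
  have h := hasDerivAt_det (A := fun s => jacobian φ (Function.update ξ j s))
    fun k l => hasDerivAt_comp_update (differentiable_jacobian_apply hφ k l ξ) j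
  rwa [Function.update_eq_self] at h

theorem jacobian_jacobian_mulVec {κ : Type*} [Fintype κ] {φ : (ι → ℝ) → κ → ℝ}
    {a : (ι → ℝ) → ι → ℝ} {ξ : ι → ℝ} (hφ : ContDiff ℝ 2 φ) (ha : DifferentiableAt ℝ a ξ) :
    jacobian (fun η => jacobian φ η *ᵥ a η) ξ = jacobian φ ξ * jacobian a ξ +
      ∑ j, a ξ j • of fun k l => partialDeriv j (fun η => jacobian φ η k l) ξ := by
  ext k l
  have hprod (j : ι) := (hasDerivAt_comp_update (differentiable_jacobian_apply hφ k j ξ) l).fun_mul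
    (hasDerivAt_comp_update (differentiableAt_pi.1 ha j) l)
  have hsymm (j : ι) : partialDeriv l (fun η => jacobian φ η k j) ξ =
      partialDeriv j (fun η => jacobian φ η k l) ξ :=
    partialDeriv_comm (contDiff_pi.1 hφ k) l j ξ
  refine (HasDerivAt.fun_sum fun j _ => hprod j).deriv.trans ?_
  simp only [Function.update_eq_self, hsymm, Finset.sum_add_distrib, Matrix.add_apply, mul_apply,
    Matrix.sum_apply, Matrix.smul_apply, of_apply, smul_eq_mul, mul_comm (a ξ _)]
  exact add_comm _ _

/-- The Piola identity. The terms `tr (adj F · ∂ⱼF)` come from Jacobi's formula on the right-hand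
side, and from `∂F_{kj}/∂ξₗ = ∂F_{kl}/∂ξⱼ` on the left. -/
theorem det_jacobian_mul_divergence_comp {φ σ a : (ι → ℝ) → ι → ℝ} {ξ : ι → ℝ}
    (hφ : ContDiff ℝ 2 φ) (hσ : DifferentiableAt ℝ σ (φ ξ)) (ha : DifferentiableAt ℝ a ξ)
    (hσa : ∀ η, σ (φ η) = jacobian φ η *ᵥ a η) :
    (jacobian φ ξ).det * divergence σ (φ ξ) =
      divergence (fun η => (jacobian φ η).det • a η) ξ := by
  set F := jacobian φ ξ
  let D (j : ι) : Matrix ι ι ℝ := of fun k l => partialDeriv j (fun η => jacobian φ η k l) ξ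
  have hjac : jacobian σ (φ ξ) * F = F * jacobian a ξ + ∑ j, a ξ j • D j := by
    rw [← jacobian_jacobian_mulVec hφ ha, ← funext hσa,
      jacobian_comp (differentiableAt_pi.1 hσ) (hφ.differentiable two_ne_zero ξ)]
  have hdiv (j : ι) : partialDeriv j (fun η => (jacobian φ η).det * a η j) ξ =
      (F.adjugate * D j).trace * a ξ j + F.det * jacobian a ξ j j := by
    have h := (hasDerivAt_det_jacobian_comp_update hφ j ξ).fun_mul
      (hasDerivAt_comp_update (differentiableAt_pi.1 ha j) j)
    rw [Function.update_eq_self] at h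
    exact h.deriv
  calc F.det * divergence σ (φ ξ)
    _ = (F.adjugate * (jacobian σ (φ ξ) * F)).trace := by
      rw [trace_mul_comm, mul_assoc, mul_adjugate, mul_smul_comm, mul_one, trace_smul, divergence,
        smul_eq_mul]
    _ = F.det * (jacobian a ξ).trace + ∑ j, a ξ j * (F.adjugate * D j).trace := by
      rw [hjac, mul_add, ← mul_assoc, adjugate_mul, smul_mul_assoc, one_mul, trace_add, trace_smul,
        Finset.mul_sum, trace_sum]
      simp
    _ = divergence (fun η => (jacobian φ η).det • a η) ξ := by
      refine Eq.trans ?_ (Finset.sum_congr rfl fun j _ => (hdiv j).symm)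
      simp only [Finset.sum_add_distrib, ← Finset.mul_sum, mul_comm (a ξ _), add_comm, trace, diag]

end Piola

section Transport

open scoped Ring

theorem hasDerivWithinAt_ringInverse {R : Type*} [NormedRing R] [NormedAlgebra ℝ R]
    [HasSummableGeomSeries R] {A : ℝ → R} {A' : R} {s : Set ℝ} {t : ℝ}
    (hA : HasDerivWithinAt A A' s t) (hu : IsUnit (A t)) :
    HasDerivWithinAt (fun τ => (A τ)⁻¹ʳ) (-((A t)⁻¹ʳ * A' * (A t)⁻¹ʳ)) s t := by
  obtain ⟨U, hU⟩ := hu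
  have hinv := hasFDerivAt_ringInverse (𝕜 := ℝ) U
  rw [hU] at hinv
  simpa [← hU, Function.comp_def] using hinv.comp_hasDerivWithinAt t hA

theorem eq_mul_mul_of_hasDerivWithinAt {R : Type*} [NormedRing R] [NormedAlgebra ℝ R]
    [HasSummableGeomSeries R] {A B Q L M : ℝ → R} {a b : ℝ}
    (hA : ∀ t ∈ Icc a b, HasDerivWithinAt A (L t * A t) (Icc a b) t)
    (hB : ∀ t ∈ Icc a b, HasDerivWithinAt B (B t * M t) (Icc a b) t)
    (hQ : ∀ t ∈ Icc a b, HasDerivWithinAt Q (L t * Q t + Q t * M t) (Icc a b) t)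
    (hAu : ∀ t ∈ Icc a b, IsUnit (A t)) (hBu : ∀ t ∈ Icc a b, IsUnit (B t))
    (hAa : A a = 1) (hBa : B a = 1) {t : ℝ} (ht : t ∈ Icc a b) :
    Q t = A t * Q a * B t := by
  have hderiv (τ : ℝ) (hτ : τ ∈ Icc a b) :
      HasDerivWithinAt (fun τ => (A τ)⁻¹ʳ * Q τ * (B τ)⁻¹ʳ) 0 (Icc a b) τ := by
    refine (((hasDerivWithinAt_ringInverse (hA τ hτ) (hAu τ hτ)).fun_mul (hQ τ hτ)).fun_mul
      (hasDerivWithinAt_ringInverse (hB τ hτ) (hBu τ hτ))).congr_deriv ?_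
    have hAA : A τ * (A τ)⁻¹ʳ = 1 := Ring.mul_inverse_cancel _ (hAu τ hτ)
    have hBB : (B τ)⁻¹ʳ * B τ = 1 := Ring.inverse_mul_cancel _ (hBu τ hτ)
    simp only [mul_assoc, hAA, mul_one]
    simp only [← mul_assoc, hBB, one_mul]
    noncomm_ring
  have hconst : (A t)⁻¹ʳ * Q t * (B t)⁻¹ʳ = Q a := by
    simpa [hAa, hBa] using constant_of_has_deriv_right_zero
      (fun τ hτ => (hderiv τ hτ).continuousWithinAt)
      (fun τ hτ => (hderiv τ (Ico_subset_Icc_self hτ)).mono_of_mem_nhdsWithin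
        (Icc_mem_nhdsGE_of_mem hτ)) t ht
  rw [← hconst, mul_assoc, mul_assoc, mul_assoc, Ring.inverse_mul_cancel _ (hBu t ht), mul_one,
    ← mul_assoc, Ring.mul_inverse_cancel _ (hAu t ht), one_mul]

open scoped Matrix.Norms.Operator

theorem hasDerivAt_matrix {m n : Type*} [Finite m] [Finite n] {A : ℝ → Matrix m n ℝ}
    {A' : Matrix m n ℝ} {t : ℝ} :
    HasDerivAt A A' t ↔ ∀ i j, HasDerivAt (fun τ => A τ i j) (A' i j) t := by
  have := Fintype.ofFinite m
  have := Fintype.ofFinite n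
  exact hasDerivAt_pi.trans (forall_congr' fun _ => hasDerivAt_pi)

theorem eq_mul_mul_transpose_of_hasDerivAt {n : Type*} [Fintype n] [DecidableEq n]
    {F Q L : ℝ → Matrix n n ℝ} {a b : ℝ}
    (hF : ∀ t ∈ Icc a b, ∀ i j, HasDerivAt (fun τ => F τ i j) ((L t * F t) i j) t)
    (hQ : ∀ t ∈ Icc a b, ∀ i j,
      HasDerivAt (fun τ => Q τ i j) ((L t * Q t + Q t * (L t)ᵀ) i j) t)
    (hFu : ∀ t ∈ Icc a b, IsUnit (F t)) (hFa : F a = 1) {t : ℝ} (ht : t ∈ Icc a b) :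
    Q t = F t * Q a * (F t)ᵀ := by
  refine eq_mul_mul_of_hasDerivWithinAt (B := fun τ => (F τ)ᵀ) (M := fun τ => (L τ)ᵀ)
    (fun τ hτ => (hasDerivAt_matrix.2 (hF τ hτ)).hasDerivWithinAt)
    (fun τ hτ => (hasDerivAt_matrix.2 fun i j => ?_).hasDerivWithinAt)
    (fun τ hτ => (hasDerivAt_matrix.2 (hQ τ hτ)).hasDerivWithinAt)
    hFu (fun τ hτ => (isUnit_transpose _).2 (hFu τ hτ)) hFa (by simp [hFa]) ht
  rw [← transpose_mul]
  exact hF τ hτ j i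

end Transport

section LagrangianFlow

variable {ι : Type*} [Fintype ι] [DecidableEq ι] {w φ : (ι → ℝ) × ℝ → ι → ℝ}

theorem hasDerivAt_jacobian_flow {t : ℝ} (hw : Differentiable ℝ w) (hφ : ContDiff ℝ 2 φ)
    (hflow : ∀ ξ, HasDerivAt (fun τ => φ (ξ, τ)) (w (φ (ξ, t), t)) t) (ξ : ι → ℝ) (i j : ι) :
    HasDerivAt (fun τ => jacobian (fun η => φ (η, τ)) ξ i j)
      ((jacobian (fun y => w (y, t)) (φ (ξ, t)) * jacobian (fun η => φ (η, t)) ξ) i j) t := by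
  have hvel (η : ι → ℝ) : deriv (fun τ => φ (η, τ) i) t = w (φ (η, t), t) i :=
    (hasDerivAt_pi.1 (hflow η) i).deriv
  have hslice : DifferentiableAt ℝ (fun η => φ (η, t)) ξ :=
    (hasFDerivAt_slice (hφ.differentiable two_ne_zero _)).differentiableAt
  have hwslice : DifferentiableAt ℝ (fun y => w (y, t)) (φ (ξ, t)) :=
    (hasFDerivAt_slice (hw _)).differentiableAt
  rw [← jacobian_comp (differentiableAt_pi.1 hwslice) hslice]
  simpa only [hvel] using! hasDerivAt_partialDeriv_slice (contDiff_pi.1 hφ i) j ξ t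

theorem deriv_deriv_trajectory {c : ℝ → ι → ℝ} (hw : Differentiable ℝ w)
    (hc : ∀ t, HasDerivAt c (w (c t, t)) t) (t : ℝ) (i : ι) :
    deriv (fun τ => deriv (fun s => c s i) τ) t = materialDeriv w (fun p => w p i) (c t) t := by
  have hvel (τ : ℝ) : deriv (fun s => c s i) τ = w (c τ, τ) i := (hasDerivAt_pi.1 (hc τ) i).deriv
  simp only [hvel]
  exact (hasDerivAt_comp_trajectory (differentiable_pi.1 hw i _) (hc t)).deriv

theorem stress_flow_eq {S : (ι → ℝ) × ℝ → Matrix ι ι ℝ} {T : ℝ} (hw : Differentiable ℝ w)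
    (hS : ∀ i j, Differentiable ℝ fun p => S p i j) (hφ : ContDiff ℝ 2 φ)
    (hflow : ∀ ξ t, HasDerivAt (fun τ => φ (ξ, τ)) (w (φ (ξ, t), t)) t)
    (hφ0 : ∀ ξ, φ (ξ, 0) = ξ)
    (hunit : ∀ ξ, ∀ t ∈ Icc 0 T, IsUnit (jacobian (fun η => φ (η, t)) ξ))
    (hconst : ∀ y, ∀ t ∈ Icc 0 T, ∀ i j, materialDeriv w (fun p => S p i j) y t =
      (jacobian (fun z => w (z, t)) y * S (y, t)
        + S (y, t) * (jacobian (fun z => w (z, t)) y)ᵀ) i j)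
    (ξ : ι → ℝ) {t : ℝ} (ht : t ∈ Icc 0 T) :
    S (φ (ξ, t), t) =
      jacobian (fun η => φ (η, t)) ξ * S (ξ, 0) * (jacobian (fun η => φ (η, t)) ξ)ᵀ := by
  have h := eq_mul_mul_transpose_of_hasDerivAt (F := fun τ => jacobian (fun η => φ (η, τ)) ξ)
    (Q := fun τ => S (φ (ξ, τ), τ)) (L := fun τ => jacobian (fun z => w (z, τ)) (φ (ξ, τ)))
    (fun τ _ => hasDerivAt_jacobian_flow hw hφ (hflow · τ) ξ)
    (fun τ hτ i j => hconst (φ (ξ, τ)) τ hτ i j ▸ hasDerivAt_comp_trajectory (hS i j _) (hflow ξ τ))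
    (hunit ξ) (by simp only [hφ0, jacobian_id]) ht
  simpa only [hφ0] using h

theorem stmt0_general {S : (ι → ℝ) × ℝ → Matrix ι ι ℝ} {P : (ι → ℝ) × ℝ → ℝ} {T : ℝ} {i : ι}
    (hw : Differentiable ℝ w) (hS : ∀ k l, Differentiable ℝ fun p => S p k l)
    (hφ : ContDiff ℝ 2 φ)
    (hflow : ∀ ξ t, HasDerivAt (fun τ => φ (ξ, τ)) (w (φ (ξ, t), t)) t)
    (hφ0 : ∀ ξ, φ (ξ, 0) = ξ)
    (hdet : ∀ ξ, ∀ t ∈ Icc 0 T, (jacobian (fun η => φ (η, t)) ξ).det = 1)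
    (hmom : ∀ y, ∀ t ∈ Icc 0 T, materialDeriv w (fun p => w p i) y t =
      divergence (fun z => S (z, t) i) y - P (y, t))
    (hconst : ∀ y, ∀ t ∈ Icc 0 T, ∀ k l, materialDeriv w (fun p => S p k l) y t =
      (jacobian (fun z => w (z, t)) y * S (y, t)
        + S (y, t) * (jacobian (fun z => w (z, t)) y)ᵀ) k l)
    (ξ : ι → ℝ) {t : ℝ} (ht : t ∈ Icc 0 T) :
    deriv (fun τ => deriv (fun s => φ (ξ, s) i) τ) t =
      ∑ l, partialDeriv l (fun η =>
        ∑ j, S (η, 0) j l * partialDeriv j (fun ζ => φ (ζ, t) i) η) ξ - P (φ (ξ, t), t) := by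
  let a (η : ι → ℝ) (l : ι) : ℝ := ∑ j, S (η, 0) j l * partialDeriv j (fun ζ => φ (ζ, t) i) η
  have hφt : ContDiff ℝ 2 fun η => φ (η, t) := hφ.comp (contDiff_prodMk_left t)
  have hunit (η : ι → ℝ) (τ : ℝ) (hτ : τ ∈ Icc 0 T) :
      IsUnit (jacobian (fun ζ => φ (ζ, τ)) η) :=
    (isUnit_iff_isUnit_det _).2 (hdet η τ hτ ▸ isUnit_one)
  have hrow (η : ι → ℝ) : S (φ (η, t), t) i = jacobian (fun ζ => φ (ζ, t)) η *ᵥ a η := by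
    funext k
    rw [stress_flow_eq hw hS hφ hflow hφ0 hunit hconst η ht, mul_apply]
    simp only [mul_apply, mulVec, dotProduct]
    refine Finset.sum_congr rfl fun l _ => (mul_comm _ _).trans ?_
    exact congrArg _ (Finset.sum_congr rfl fun j _ => mul_comm _ _)
  have hSt : DifferentiableAt ℝ (fun z => S (z, t) i) (φ (ξ, t)) :=
    differentiableAt_pi.2 fun k => (hasFDerivAt_slice (hS i k _)).differentiableAt
  have ha : DifferentiableAt ℝ a ξ := differentiableAt_pi.2 fun l =>
    DifferentiableAt.fun_sum fun j _ => (hasFDerivAt_slice (hS j l _)).differentiableAt.mul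
      (differentiable_jacobian_apply hφt i j ξ)
  have hpiola : divergence (fun z => S (z, t) i) (φ (ξ, t)) = divergence a ξ := by
    simpa only [hdet _ t ht, one_mul, one_smul] using
      det_jacobian_mul_divergence_comp hφt hSt ha hrow
  rw [deriv_deriv_trajectory hw (hflow ξ), hmom _ t ht, hpiola]
  rfl

end LagrangianFlow

section Planar

/-- The planar vector field with components `f` and `g`, given as functions of two coordinates and
time, as a field on `(Fin 2 → ℝ) × ℝ`. -/
def planarField (f g : ℝ → ℝ → ℝ → ℝ) (p : (Fin 2 → ℝ) × ℝ) : Fin 2 → ℝ :=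
  ![f (p.1 0) (p.1 1) p.2, g (p.1 0) (p.1 1) p.2]

theorem contDiff_comp_coords {f : ℝ → ℝ → ℝ → ℝ} {n : WithTop ℕ∞}
    (hf : ContDiff ℝ n fun p : ℝ × ℝ × ℝ => f p.1 p.2.1 p.2.2) :
    ContDiff ℝ n fun p : (Fin 2 → ℝ) × ℝ => f (p.1 0) (p.1 1) p.2 :=
  hf.comp (g := fun p : ℝ × ℝ × ℝ => f p.1 p.2.1 p.2.2)
    (f := fun p : (Fin 2 → ℝ) × ℝ => (p.1 0, p.1 1, p.2)) (by fun_prop)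

theorem contDiff_planarField {f g : ℝ → ℝ → ℝ → ℝ} {n : WithTop ℕ∞}
    (hf : ContDiff ℝ n fun p : ℝ × ℝ × ℝ => f p.1 p.2.1 p.2.2)
    (hg : ContDiff ℝ n fun p : ℝ × ℝ × ℝ => g p.1 p.2.1 p.2.2) :
    ContDiff ℝ n (planarField f g) :=
  contDiff_pi.2 (Fin.forall_fin_two.2 ⟨contDiff_comp_coords hf, contDiff_comp_coords hg⟩)

theorem jacobian_planarField (f g : ℝ → ℝ → ℝ → ℝ) (ξ : Fin 2 → ℝ) (t : ℝ) :
    jacobian (fun η => planarField f g (η, t)) ξ =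
      !![deriv (fun s => f s (ξ 1) t) (ξ 0), deriv (fun s => f (ξ 0) s t) (ξ 1);
         deriv (fun s => g s (ξ 1) t) (ξ 0), deriv (fun s => g (ξ 0) s t) (ξ 1)] :=
  eta_fin_two _

theorem materialDeriv_planarField (u v f : ℝ → ℝ → ℝ → ℝ) (y : Fin 2 → ℝ) (t : ℝ) :
    materialDeriv (planarField u v) (fun p => f (p.1 0) (p.1 1) p.2) y t =
      deriv (fun τ => f (y 0) (y 1) τ) t + u (y 0) (y 1) t * deriv (fun s => f s (y 1) t) (y 0)
        + v (y 0) (y 1) t * deriv (fun r => f (y 0) r t) (y 1) := by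
  rw [materialDeriv, Fin.sum_univ_two, ← add_assoc]
  rfl

end Planar

/-- Lemma 1 of the paper: For the boundary layer system of the upper
convected Maxwell fluid — velocities `u, v`, symmetric extra stress `S`, pressure
gradient `P`, flow map `φ = (x, y)` with deformation gradient `F = D_ξ φ` of
determinant one — the horizontal Lagrangian position `x(ξ₁, ξ₂, t)` satisfies the
semilinear wave equation
`x_tt = Σᵢⱼ ∂_{ξᵢ} (C_{ji} ∂_{ξⱼ} x) − P(x, t)`, where `C(ξ) = S(ξ, 0)`. -/
theorem stmt0 (T : ℝ) (hT : 0 < T)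
    (u v : ℝ → ℝ → ℝ → ℝ)
    (S : ℝ → ℝ → ℝ → Matrix (Fin 2) (Fin 2) ℝ)
    (P : ℝ → ℝ → ℝ)
    (x y : ℝ → ℝ → ℝ → ℝ)
    -- smoothness
    (hu : ContDiff ℝ 2 fun p : ℝ × ℝ × ℝ => u p.1 p.2.1 p.2.2)
    (hv : ContDiff ℝ 2 fun p : ℝ × ℝ × ℝ => v p.1 p.2.1 p.2.2)
    (hS : ∀ i j, ContDiff ℝ 2 fun p : ℝ × ℝ × ℝ => S p.1 p.2.1 p.2.2 i j)
    (hSsymm : ∀ a b t, (S a b t).IsSymm)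
    (hP : Continuous fun p : ℝ × ℝ => P p.1 p.2)
    (hx : ContDiff ℝ 2 fun p : ℝ × ℝ × ℝ => x p.1 p.2.1 p.2.2)
    (hy : ContDiff ℝ 2 fun p : ℝ × ℝ × ℝ => y p.1 p.2.1 p.2.2)
    -- flow map: ∂φ/∂t(ξ,t) = (u,v)(φ(ξ,t),t), φ(ξ,0) = ξ
    (hflowx : ∀ ξ₁ ξ₂ t, HasDerivAt (fun τ => x ξ₁ ξ₂ τ) (u (x ξ₁ ξ₂ t) (y ξ₁ ξ₂ t) t) t)
    (hflowy : ∀ ξ₁ ξ₂ t, HasDerivAt (fun τ => y ξ₁ ξ₂ τ) (v (x ξ₁ ξ₂ t) (y ξ₁ ξ₂ t) t) t)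
    (hx0 : ∀ ξ₁ ξ₂, x ξ₁ ξ₂ 0 = ξ₁)
    (hy0 : ∀ ξ₁ ξ₂, y ξ₁ ξ₂ 0 = ξ₂)
    -- deformation gradient: F = D_ξ φ, det F = 1, F invertible
    (F : ℝ → ℝ → ℝ → Matrix (Fin 2) (Fin 2) ℝ)
    (hF : ∀ ξ₁ ξ₂ t, F ξ₁ ξ₂ t =
      !![deriv (fun s => x s ξ₂ t) ξ₁, deriv (fun s => x ξ₁ s t) ξ₂;
         deriv (fun s => y s ξ₂ t) ξ₁, deriv (fun s => y ξ₁ s t) ξ₂])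
    (hdet : ∀ ξ₁ ξ₂, ∀ t ∈ Icc (0 : ℝ) T, (F ξ₁ ξ₂ t).det = 1)
    (hFinv : ∀ ξ₁ ξ₂, ∀ t ∈ Icc (0 : ℝ) T, IsUnit (F ξ₁ ξ₂ t))
    -- momentum equation: u_t + u u_x + v u_y = ∂S₁₁/∂x + ∂S₁₂/∂y − P(x,t)
    (hmom : ∀ a b : ℝ, ∀ t ∈ Icc (0 : ℝ) T,
      deriv (fun τ => u a b τ) t + u a b t * deriv (fun s => u s b t) a
          + v a b t * deriv (fun r => u a r t) b
        = deriv (fun s => S s b t 0 0) a + deriv (fun r => S a r t 0 1) b - P a t)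
    -- constitutive equation: S_t + u S_x + v S_y − (∇v)S − S(∇v)ᵀ = 0
    (hconst : ∀ a b : ℝ, ∀ t ∈ Icc (0 : ℝ) T, ∀ i j : Fin 2,
      deriv (fun τ => S a b τ i j) t + u a b t * deriv (fun s => S s b t i j) a
          + v a b t * deriv (fun r => S a r t i j) b
        - ((!![deriv (fun s => u s b t) a, deriv (fun r => u a r t) b;
               deriv (fun s => v s b t) a, deriv (fun r => v a r t) b] * S a b t) i j)
        - ((S a b t * (!![deriv (fun s => u s b t) a, deriv (fun r => u a r t) b;
               deriv (fun s => v s b t) a, deriv (fun r => v a r t) b])ᵀ) i j) = 0)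
    -- C(ξ) := S(ξ, 0)
    (C : ℝ → ℝ → Matrix (Fin 2) (Fin 2) ℝ)
    (hC : ∀ ξ₁ ξ₂, C ξ₁ ξ₂ = S ξ₁ ξ₂ 0) :
    -- conclusion: x_tt = Σᵢⱼ ∂_{ξᵢ}(C_{ji} ∂_{ξⱼ} x) − P(x,t)
    ∀ ξ₁ ξ₂ : ℝ, ∀ t ∈ Icc (0 : ℝ) T,
      deriv (fun τ => deriv (fun σ => x ξ₁ ξ₂ σ) τ) t
        = deriv (fun s => C s ξ₂ 0 0 * deriv (fun r => x r ξ₂ t) s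
                        + C s ξ₂ 1 0 * deriv (fun r => x s r t) ξ₂) ξ₁
          + deriv (fun r => C ξ₁ r 0 1 * deriv (fun s => x s r t) ξ₁
                          + C ξ₁ r 1 1 * deriv (fun r' => x ξ₁ r' t) r) ξ₂
          - P (x ξ₁ ξ₂ t) t := by
  have hmom' (z : Fin 2 → ℝ) (t : ℝ) (ht : t ∈ Icc 0 T) :=
    (materialDeriv_planarField u v u z t).trans (hmom (z 0) (z 1) t ht)
  have hconst' (z : Fin 2 → ℝ) (t : ℝ) (ht : t ∈ Icc 0 T) (i j : Fin 2) :=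
    (materialDeriv_planarField u v (S · · · i j) z t).trans
      (sub_eq_zero.1 ((sub_sub _ _ _).symm.trans (hconst (z 0) (z 1) t ht i j)))
  intro ξ₁ ξ₂ t ht
  have hwave := stmt0_general (w := planarField u v) (φ := planarField x y) (T := T) (i := 0)
    (S := fun p => S (p.1 0) (p.1 1) p.2) (P := fun p => P (p.1 0) p.2)
    ((contDiff_planarField hu hv).differentiable two_ne_zero)
    (fun i j => (contDiff_comp_coords (f := (S · · · i j)) (hS i j)).differentiable two_ne_zero)
    (contDiff_planarField hx hy)
    (fun ξ t => hasDerivAt_pi.2 (Fin.forall_fin_two.2 ⟨hflowx _ _ t, hflowy _ _ t⟩))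
    (fun ξ => funext (Fin.forall_fin_two.2 ⟨hx0 _ _, hy0 _ _⟩))
    (fun ξ t ht => by rw [jacobian_planarField, ← hF, hdet _ _ t ht])
    (fun z t ht => by rw [divergence, trace_fin_two]; exact hmom' z t ht)
    (fun z t ht i j => by rw [jacobian_planarField]; exact hconst' z t ht i j)
    ![ξ₁, ξ₂] ht
  simp only [Fin.sum_univ_two] at hwave
  simpa only [hC] using! hwave
end

section
/- Let n ≥ 1 and let F, S, L : [0,T] → Matrix (Fin n) (Fin n) ℝ be differentiable maps such that F(t) is invertible for every t ∈ [0,T], F'(t) = L(t) F(t), and S'(t) = L(t) S(t) + S(t) L(t)ᵀ. Then the map t ↦ F(t)⁻¹ S(t) (F(t)⁻¹)ᵀ is constant on [0,T]. -/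
open Matrix Set

/-!
The equation for `F` gives `(F⁻¹)' = -F⁻¹ L`; transposing it, `G = Fᵀ` solves `G' = G Lᵀ`, so that
`(G⁻¹)' = -Lᵀ G⁻¹`. In the product rule for `F⁻¹ S G⁻¹` these two contributions cancel against
`F⁻¹ (L S + S Lᵀ) G⁻¹`. The same cancellation takes place in any Banach algebra, with unrelated
coefficients `l` and `m` in place of `L` and `Lᵀ`.
-/

theorem eq_of_hasDerivWithinAt_zero {𝕜 E : Type*} [RCLike 𝕜]
    [NormedAddCommGroup E] [NormedSpace 𝕜 E] {f : 𝕜 → E} {s : Set 𝕜} (hs : Convex ℝ s)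
    (hf : ∀ t ∈ s, HasDerivWithinAt f 0 s t) {a b : 𝕜} (ha : a ∈ s) (hb : b ∈ s) :
    f a = f b := by
  have hdist : ‖f a - f b‖ ≤ 0 * ‖a - b‖ :=
    hs.norm_image_sub_le_of_norm_hasDerivWithin_le hf (fun _ _ => norm_zero.le) hb ha
  simpa only [zero_mul, norm_le_zero_iff, sub_eq_zero] using hdist

section BanachAlgebra

open Ring

variable {𝕜 R : Type*} [NormedRing R] [HasSummableGeomSeries R]

section Derivative

variable [NontriviallyNormedField 𝕜] [NormedAlgebra 𝕜 R]
  {F G S : 𝕜 → R} {s : Set 𝕜} {t : 𝕜}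

theorem hasDerivWithinAt_ringInverse_comp {F' : R} (hF : HasDerivWithinAt F F' s t)
    (hFt : IsUnit (F t)) :
    HasDerivWithinAt (fun τ => (F τ)⁻¹ʳ) (-((F t)⁻¹ʳ * F' * (F t)⁻¹ʳ)) s t := by
  obtain ⟨u, hu⟩ := hFt
  have hinv : HasFDerivAt Ring.inverse (-ContinuousLinearMap.mulLeftRight 𝕜 R ↑u⁻¹ ↑u⁻¹) (F t) :=
    hu ▸ hasFDerivAt_ringInverse u
  simpa [Function.comp_def, ← hu] using hinv.comp_hasDerivWithinAt t hF

theorem hasDerivWithinAt_ringInverse_of_mul_left {l : R}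
    (hF : HasDerivWithinAt F (l * F t) s t) (hFt : IsUnit (F t)) :
    HasDerivWithinAt (fun τ => (F τ)⁻¹ʳ) (-((F t)⁻¹ʳ * l)) s t := by
  simpa only [mul_assoc, mul_inverse_cancel _ hFt, mul_one]
    using hasDerivWithinAt_ringInverse_comp hF hFt

theorem hasDerivWithinAt_ringInverse_of_mul_right {m : R}
    (hG : HasDerivWithinAt G (G t * m) s t) (hGt : IsUnit (G t)) :
    HasDerivWithinAt (fun τ => (G τ)⁻¹ʳ) (-(m * (G t)⁻¹ʳ)) s t := by
  simpa only [inverse_mul_cancel_left _ _ hGt]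
    using hasDerivWithinAt_ringInverse_comp hG hGt

theorem hasDerivWithinAt_ringInverse_mul_mul_ringInverse_zero {l m : R}
    (hFt : IsUnit (F t)) (hGt : IsUnit (G t))
    (hF : HasDerivWithinAt F (l * F t) s t) (hG : HasDerivWithinAt G (G t * m) s t)
    (hS : HasDerivWithinAt S (l * S t + S t * m) s t) :
    HasDerivWithinAt (fun τ => (F τ)⁻¹ʳ * S τ * (G τ)⁻¹ʳ) 0 s t := by
  have hFinv := hasDerivWithinAt_ringInverse_of_mul_left hF hFt
  have hGinv := hasDerivWithinAt_ringInverse_of_mul_right hG hGt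
  refine ((hFinv.fun_mul hS).fun_mul hGinv).congr_deriv ?_
  noncomm_ring

end Derivative

theorem ringInverse_mul_mul_ringInverse_eq [RCLike 𝕜] [NormedAlgebra 𝕜 R]
    {F G S l m : 𝕜 → R} {s : Set 𝕜} (hs : Convex ℝ s)
    (hFu : ∀ t ∈ s, IsUnit (F t)) (hGu : ∀ t ∈ s, IsUnit (G t))
    (hF : ∀ t ∈ s, HasDerivWithinAt F (l t * F t) s t)
    (hG : ∀ t ∈ s, HasDerivWithinAt G (G t * m t) s t)
    (hS : ∀ t ∈ s, HasDerivWithinAt S (l t * S t + S t * m t) s t)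
    {a b : 𝕜} (ha : a ∈ s) (hb : b ∈ s) :
    (F a)⁻¹ʳ * S a * (G a)⁻¹ʳ = (F b)⁻¹ʳ * S b * (G b)⁻¹ʳ :=
  eq_of_hasDerivWithinAt_zero hs (fun t ht =>
    hasDerivWithinAt_ringInverse_mul_mul_ringInverse_zero
      (hFu t ht) (hGu t ht) (hF t ht) (hG t ht) (hS t ht)) ha hb

end BanachAlgebra

section Matrices

attribute [local instance] Matrix.linftyOpNormedRing Matrix.linftyOpNormedAlgebra

variable {𝕜 A ι : Type*}

theorem hasDerivWithinAt_matrix_iff {κ : Type*} [Finite κ] [NontriviallyNormedField 𝕜]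
    [NormedAddCommGroup A] [NormedSpace 𝕜 A]
    {M : 𝕜 → Matrix ι κ A} {M' : Matrix ι κ A} {s : Set 𝕜} {t : 𝕜} :
    HasDerivWithinAt M M' s t ↔
      ∀ i j, HasDerivWithinAt (fun τ => M τ i j) (M' i j) s t := by
  have := Fintype.ofFinite κ
  exact hasDerivWithinAt_pi.trans (forall_congr' fun _ => hasDerivWithinAt_pi)

theorem hasSummableGeomSeries_matrix [Fintype ι] [DecidableEq ι] [NormedRing A] [CompleteSpace A] :
    HasSummableGeomSeries (Matrix ι ι A) :=
  -- The norm's uniform structure is the entrywise one only up to unfolding, which instance search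
  -- does not do.
  @instHasSummableGeomSeriesOfCompleteSpace _ _ (inferInstanceAs (CompleteSpace (ι → ι → A)))

attribute [local instance] hasSummableGeomSeries_matrix

theorem stmt6_general [Fintype ι] [DecidableEq ι] [RCLike 𝕜] [NormedCommRing A] [NormedAlgebra 𝕜 A]
    [CompleteSpace A] {s : Set 𝕜} (hs : Convex ℝ s) {F S L : 𝕜 → Matrix ι ι A}
    (hFinv : ∀ t ∈ s, IsUnit (F t))
    (hF : ∀ t ∈ s, ∀ i j, HasDerivWithinAt (fun τ => F τ i j) ((L t * F t) i j) s t)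
    (hS : ∀ t ∈ s, ∀ i j,
      HasDerivWithinAt (fun τ => S τ i j) ((L t * S t + S t * (L t)ᵀ) i j) s t)
    {a b : 𝕜} (ha : a ∈ s) (hb : b ∈ s) :
    (F a)⁻¹ * S a * ((F a)⁻¹)ᵀ = (F b)⁻¹ * S b * ((F b)⁻¹)ᵀ := by
  have hFt : ∀ t ∈ s, HasDerivWithinAt (fun τ => (F τ)ᵀ) ((F t)ᵀ * (L t)ᵀ) s t := fun t ht =>
    hasDerivWithinAt_matrix_iff.2 fun i j => by
      simpa only [← transpose_mul, transpose_apply] using hF t ht j i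
  simp_rw [transpose_nonsing_inv, nonsing_inv_eq_ringInverse]
  exact ringInverse_mul_mul_ringInverse_eq hs hFinv
    (fun t ht => (isUnit_transpose _).2 (hFinv t ht))
    (fun t ht => hasDerivWithinAt_matrix_iff.2 (hF t ht)) hFt
    (fun t ht => hasDerivWithinAt_matrix_iff.2 (hS t ht)) ha hb

end Matrices

/-- If `F, S, L : [0,T] → Matrix (Fin n) (Fin n) ℝ` are differentiable,
`F(t)` is invertible, `F' = L F` and `S' = L S + S Lᵀ`, then `t ↦ F⁻¹ S F⁻ᵀ` is
constant on `[0, T]`. Derivatives of matrix-valued maps are taken entrywise. -/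
theorem stmt6 (n : ℕ) (hn : 1 ≤ n) (T : ℝ) (hT : 0 < T)
    (F S L : ℝ → Matrix (Fin n) (Fin n) ℝ)
    (hL : ∀ i j, Differentiable ℝ fun t => L t i j)
    (hFinv : ∀ t ∈ Icc (0 : ℝ) T, IsUnit (F t))
    (hF : ∀ t ∈ Icc (0 : ℝ) T, ∀ i j : Fin n,
      HasDerivAt (fun τ => F τ i j) ((L t * F t) i j) t)
    (hS : ∀ t ∈ Icc (0 : ℝ) T, ∀ i j : Fin n,
      HasDerivAt (fun τ => S τ i j) ((L t * S t + S t * (L t)ᵀ) i j) t) :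
    ∀ t ∈ Icc (0 : ℝ) T,
      (F t)⁻¹ * S t * ((F t)⁻¹)ᵀ = (F 0)⁻¹ * S 0 * ((F 0)⁻¹)ᵀ := by
  intro t ht
  exact stmt6_general (convex_Icc 0 T) hFinv
    (fun τ hτ i j => (hF τ hτ i j).hasDerivWithinAt)
    (fun τ hτ i j => (hS τ hτ i j).hasDerivWithinAt) ht (left_mem_Icc.2 hT.le)
end

section
/- Let a₁₁, a₁₂, a₂₂ : ℝ² → ℝ be C¹ functions of ξ = (ξ₁, ξ₂), and let U, V, W : ℝ² × [0,T] → ℝ be C² functions satisfying ∂V/∂t = a₁₁ ∂U/∂ξ₁ + a₁₂ ∂U/∂ξ₂ and ∂W/∂t = a₁₂ ∂U/∂ξ₁ + a₂₂ ∂U/∂ξ₂ on ℝ² × [0,T]. Then the combination G := a₂₂ ∂V/∂ξ₂ − a₁₂ ∂W/∂ξ₂ + a₁₂ ∂V/∂ξ₁ − a₁₁ ∂W/∂ξ₁ satisfies, pointwise, ∂G/∂t = ( a₁₂ ∂a₁₁/∂ξ₁ + a₂₂ ∂a₁₁/∂ξ₂ − a₁₁ ∂a₁₂/∂ξ₁ −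 a₁₂ ∂a₁₂/∂ξ₂ ) ∂U/∂ξ₁ + ( a₁₂ ∂a₁₂/∂ξ₁ + a₂₂ ∂a₁₂/∂ξ₂ − a₁₁ ∂a₂₂/∂ξ₁ − a₁₂ ∂a₂₂/∂ξ₂ ) ∂U/∂ξ₂; in particular all second derivatives of U cancel. -/
open Set

/-!
In terms of the vector fields `X = (a₁₁, a₁₂)` and `Y = (a₁₂, a₂₂)` on the `ξ`-plane, the system
reads `V_t = X U`, `W_t = Y U`, and `G = Y V - X W`. The fields do not depend on time, so
`G_t = Y (X U) - X (Y U) = [Y, X] U`: the commutator of two first-order operators is again of first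
order, its coefficients being the components of the Lie bracket `[Y, X] = DX(Y) - DY(X)`.
-/

open Filter Topology VectorField

section

variable {𝕜 : Type*} [NontriviallyNormedField 𝕜]
  {E : Type*} [NormedAddCommGroup E] [NormedSpace 𝕜 E]
  {F : Type*} [NormedAddCommGroup F] [NormedSpace 𝕜 F]
  {G : Type*} [NormedAddCommGroup G] [NormedSpace 𝕜 G]
  {H : Type*} [NormedAddCommGroup H] [NormedSpace 𝕜 H]
  {n : WithTop ℕ∞}

theorem eventually_differentiableAt_of_contDiffAt {f : E → F} {x : E}
    (hf : ContDiffAt 𝕜 n f x) (hn : 1 ≤ n) : ∀ᶠ y in 𝓝 x, DifferentiableAt 𝕜 f y :=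
  ((hf.of_le hn).eventually (by simp)).mono fun _ hy => hy.differentiableAt one_ne_zero

theorem one_le_of_minSmoothness_two_le (hn : minSmoothness 𝕜 2 ≤ n) : 1 ≤ n :=
  (one_le_two.trans le_minSmoothness).trans hn

theorem fderiv_comp_prodMk_left_apply {f : E × F → G} {x : E} {y : F}
    (hf : DifferentiableAt 𝕜 f (x, y)) (v : E) :
    fderiv 𝕜 (fun x' => f (x', y)) x v = fderiv 𝕜 f (x, y) (v, 0) := by
  have hcomp : HasFDerivAt (fun x' => f (x', y))
      ((fderiv 𝕜 f (x, y)).comp (.inl 𝕜 E F)) x :=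
    hf.hasFDerivAt.comp x (hasFDerivAt_prodMk_left x y)
  simp [hcomp.fderiv]

theorem hasDerivAt_comp_prodMk_right {f : E × 𝕜 → F} {x : E} {t : 𝕜}
    (hf : DifferentiableAt 𝕜 f (x, t)) :
    HasDerivAt (fun τ => f (x, τ)) (fderiv 𝕜 f (x, t) (0, 1)) t :=
  hf.hasFDerivAt.comp_hasDerivAt t ((hasDerivAt_const t x).prodMk (hasDerivAt_id t))

theorem fderiv_prod_apply_eq_smul_deriv_add {f : 𝕜 × 𝕜 → F} {x y : 𝕜}
    (hf : DifferentiableAt 𝕜 f (x, y)) (a b : 𝕜) :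
    fderiv 𝕜 f (x, y) (a, b) =
      a • deriv (fun s => f (s, y)) x + b • deriv (fun s => f (x, s)) y := by
  have hsplit : ((a, b) : 𝕜 × 𝕜) = a • (1, 0) + b • (0, 1) := by simp
  rw [hsplit, map_add, map_smul, map_smul, ← fderiv_comp_prodMk_left_apply hf,
    fderiv_apply_one_eq_deriv, (hasDerivAt_comp_prodMk_right hf).deriv]

theorem lieBracket_prodMk {a₁ b₁ : E × F → E} {a₂ b₂ : E × F → F} {p : E × F}
    (ha₁ : DifferentiableAt 𝕜 a₁ p) (ha₂ : DifferentiableAt 𝕜 a₂ p)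
    (hb₁ : DifferentiableAt 𝕜 b₁ p) (hb₂ : DifferentiableAt 𝕜 b₂ p) :
    lieBracket 𝕜 (fun q => (a₁ q, a₂ q)) (fun q => (b₁ q, b₂ q)) p =
      (fderiv 𝕜 b₁ p (a₁ p, a₂ p) - fderiv 𝕜 a₁ p (b₁ p, b₂ p),
        fderiv 𝕜 b₂ p (a₁ p, a₂ p) - fderiv 𝕜 a₂ p (b₁ p, b₂ p)) := by
  simp [lieBracket_eq, ha₁.fderiv_prodMk ha₂, hb₁.fderiv_prodMk hb₂]

theorem hasDerivAt_fderiv_apply_of_contDiffAt {f : E × 𝕜 → F} {x : E} {t : 𝕜}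
    (hf : ContDiffAt 𝕜 n f (x, t)) (hn : minSmoothness 𝕜 2 ≤ n) (v : E) :
    HasDerivAt (fun τ => fderiv 𝕜 (fun y => f (y, τ)) x v)
      (fderiv 𝕜 (fun y => deriv (fun τ => f (y, τ)) t) x v) t := by
  have hdiff := eventually_differentiableAt_of_contDiffAt hf (one_le_of_minSmoothness_two_le hn)
  have hspace : (fun τ => fderiv 𝕜 (fun y => f (y, τ)) x v) =ᶠ[𝓝 t]
      fun τ => fderiv 𝕜 f (x, τ) (v, 0) :=
    ((Continuous.prodMk_right x).tendsto t).eventually hdiff |>.mono fun τ hτ =>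
      fderiv_comp_prodMk_left_apply hτ v
  have htime : (fun y => deriv (fun τ => f (y, τ)) t) =ᶠ[𝓝 x]
      fun y => fderiv 𝕜 f (y, t) (0, 1) :=
    ((Continuous.prodMk_left t).tendsto x).eventually hdiff |>.mono fun y hy =>
      (hasDerivAt_comp_prodMk_right hy).deriv
  have hf' : DifferentiableAt 𝕜 (fderiv 𝕜 f) (x, t) :=
    (hf.fderiv_right (m := 1) (le_minSmoothness.trans hn)).differentiableAt one_ne_zero
  have happly (w : E × 𝕜) : DifferentiableAt 𝕜 (fun p => fderiv 𝕜 f p w) (x, t) :=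
    hf'.clm_apply (differentiableAt_const w)
  have hsymm : fderiv 𝕜 (fun p => fderiv 𝕜 f p (0, 1)) (x, t) (v, 0) =
      fderiv 𝕜 (fun p => fderiv 𝕜 f p (v, 0)) (x, t) (0, 1) := by
    simpa [fderiv_clm_apply hf'] using (hf.isSymmSndFDerivAt hn).eq (v, 0) (0, 1)
  rw [htime.fderiv_eq, fderiv_comp_prodMk_left_apply (happly (0, 1)), hsymm]
  exact (hasDerivAt_comp_prodMk_right (happly (v, 0))).congr_of_eventuallyEq hspace

theorem hasDerivAt_fderiv_sub_fderiv_lieBracket {X Y : E → E} {u : E → F} {V W : E × 𝕜 → F}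
    {x : E} {t : 𝕜} (hn : minSmoothness 𝕜 2 ≤ n)
    (hX : DifferentiableAt 𝕜 X x) (hY : DifferentiableAt 𝕜 Y x) (hu : ContDiffAt 𝕜 n u x)
    (hV : ContDiffAt 𝕜 n V (x, t)) (hW : ContDiffAt 𝕜 n W (x, t))
    (hVt : ∀ᶠ y in 𝓝 x, deriv (fun τ => V (y, τ)) t = fderiv 𝕜 u y (X y))
    (hWt : ∀ᶠ y in 𝓝 x, deriv (fun τ => W (y, τ)) t = fderiv 𝕜 u y (Y y)) :
    HasDerivAt
      (fun τ => fderiv 𝕜 (fun y => V (y, τ)) x (Y x) - fderiv 𝕜 (fun y => W (y, τ)) x (X x))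
      (fderiv 𝕜 u x (lieBracket 𝕜 Y X x)) t := by
  rw [fderiv_apply_lieBracket hu hn hX hY, ← EventuallyEq.fderiv_eq hVt,
    ← EventuallyEq.fderiv_eq hWt]
  exact (hasDerivAt_fderiv_apply_of_contDiffAt hV hn (Y x)).sub
    (hasDerivAt_fderiv_apply_of_contDiffAt hW hn (X x))

theorem eventually_fderiv_slice_apply_eq {V : 𝕜 → 𝕜 → E → F} {x y : 𝕜} {t : E}
    (hV : ContDiffAt 𝕜 n (fun p : 𝕜 × 𝕜 × E => V p.1 p.2.1 p.2.2) (x, y, t)) (hn : 1 ≤ n)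
    (a b : 𝕜) :
    ∀ᶠ τ in 𝓝 t, fderiv 𝕜 (fun p : 𝕜 × 𝕜 => V p.1 p.2 τ) (x, y) (a, b) =
      a • deriv (fun s => V s y τ) x + b • deriv (fun s => V x s τ) y := by
  have htendsto : Tendsto (fun τ : E => (x, y, τ)) (𝓝 t) (𝓝 (x, y, t)) :=
    Continuous.tendsto (by fun_prop) t
  filter_upwards [htendsto.eventually (eventually_differentiableAt_of_contDiffAt hV hn)] with τ hτ
  have hslice : DifferentiableAt 𝕜 (fun p : 𝕜 × 𝕜 => V p.1 p.2 τ) (x, y) :=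
    hτ.comp (f := fun p : 𝕜 × 𝕜 => (p.1, p.2, τ)) (x, y) (by fun_prop)
  exact fderiv_prod_apply_eq_smul_deriv_add hslice a b

theorem contDiffAt_comp_prodAssoc {V : E → F → G → H} {x : E} {y : F} {t : G}
    (hV : ContDiffAt 𝕜 n (fun p : E × F × G => V p.1 p.2.1 p.2.2) (x, y, t)) :
    ContDiffAt 𝕜 n (fun q : (E × F) × G => V q.1.1 q.1.2 q.2) ((x, y), t) :=
  hV.comp (f := fun q : (E × F) × G => (q.1.1, q.1.2, q.2)) ((x, y), t) (by fun_prop)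

theorem stmt14_general {a11 a12 a21 a22 : 𝕜 → 𝕜 → 𝕜} {U V W : 𝕜 → 𝕜 → 𝕜 → F} {ξ₁ ξ₂ t : 𝕜}
    (hn : minSmoothness 𝕜 2 ≤ n)
    (ha11 : DifferentiableAt 𝕜 (fun p : 𝕜 × 𝕜 => a11 p.1 p.2) (ξ₁, ξ₂))
    (ha12 : DifferentiableAt 𝕜 (fun p : 𝕜 × 𝕜 => a12 p.1 p.2) (ξ₁, ξ₂))
    (ha21 : DifferentiableAt 𝕜 (fun p : 𝕜 × 𝕜 => a21 p.1 p.2) (ξ₁, ξ₂))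
    (ha22 : DifferentiableAt 𝕜 (fun p : 𝕜 × 𝕜 => a22 p.1 p.2) (ξ₁, ξ₂))
    (hU : ContDiffAt 𝕜 n (fun p : 𝕜 × 𝕜 => U p.1 p.2 t) (ξ₁, ξ₂))
    (hV : ContDiffAt 𝕜 n (fun p : 𝕜 × 𝕜 × 𝕜 => V p.1 p.2.1 p.2.2) (ξ₁, ξ₂, t))
    (hW : ContDiffAt 𝕜 n (fun p : 𝕜 × 𝕜 × 𝕜 => W p.1 p.2.1 p.2.2) (ξ₁, ξ₂, t))
    (heqV : ∀ᶠ p : 𝕜 × 𝕜 in 𝓝 (ξ₁, ξ₂), deriv (fun τ => V p.1 p.2 τ) t =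
      a11 p.1 p.2 • deriv (fun s => U s p.2 t) p.1 + a12 p.1 p.2 • deriv (fun s => U p.1 s t) p.2)
    (heqW : ∀ᶠ p : 𝕜 × 𝕜 in 𝓝 (ξ₁, ξ₂), deriv (fun τ => W p.1 p.2 τ) t =
      a21 p.1 p.2 • deriv (fun s => U s p.2 t) p.1 + a22 p.1 p.2 • deriv (fun s => U p.1 s t) p.2) :
    HasDerivAt
      (fun τ =>
        a22 ξ₁ ξ₂ • deriv (fun s => V ξ₁ s τ) ξ₂ - a12 ξ₁ ξ₂ • deriv (fun s => W ξ₁ s τ) ξ₂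
          + a21 ξ₁ ξ₂ • deriv (fun s => V s ξ₂ τ) ξ₁ - a11 ξ₁ ξ₂ • deriv (fun s => W s ξ₂ τ) ξ₁)
      ((a21 ξ₁ ξ₂ * deriv (fun s => a11 s ξ₂) ξ₁ + a22 ξ₁ ξ₂ * deriv (fun s => a11 ξ₁ s) ξ₂
          - a11 ξ₁ ξ₂ * deriv (fun s => a21 s ξ₂) ξ₁
          - a12 ξ₁ ξ₂ * deriv (fun s => a21 ξ₁ s) ξ₂) • deriv (fun s => U s ξ₂ t) ξ₁
        + (a21 ξ₁ ξ₂ * deriv (fun s => a12 s ξ₂) ξ₁ + a22 ξ₁ ξ₂ * deriv (fun s => a12 ξ₁ s) ξ₂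
          - a11 ξ₁ ξ₂ * deriv (fun s => a22 s ξ₂) ξ₁
          - a12 ξ₁ ξ₂ * deriv (fun s => a22 ξ₁ s) ξ₂) • deriv (fun s => U ξ₁ s t) ξ₂) t := by
  have hn1 := one_le_of_minSmoothness_two_le hn
  have hUdiff := eventually_differentiableAt_of_contDiffAt hU hn1
  have hVt : ∀ᶠ p : 𝕜 × 𝕜 in 𝓝 (ξ₁, ξ₂), deriv (fun τ => V p.1 p.2 τ) t =
      fderiv 𝕜 (fun p : 𝕜 × 𝕜 => U p.1 p.2 t) p (a11 p.1 p.2, a12 p.1 p.2) := by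
    filter_upwards [heqV, hUdiff] with p hp hUp
    rw [hp, fderiv_prod_apply_eq_smul_deriv_add hUp]
  have hWt : ∀ᶠ p : 𝕜 × 𝕜 in 𝓝 (ξ₁, ξ₂), deriv (fun τ => W p.1 p.2 τ) t =
      fderiv 𝕜 (fun p : 𝕜 × 𝕜 => U p.1 p.2 t) p (a21 p.1 p.2, a22 p.1 p.2) := by
    filter_upwards [heqW, hUdiff] with p hp hUp
    rw [hp, fderiv_prod_apply_eq_smul_deriv_add hUp]
  have hbracket := hasDerivAt_fderiv_sub_fderiv_lieBracket hn (ha11.prodMk ha12)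
    (ha21.prodMk ha22) hU (contDiffAt_comp_prodAssoc hV) (contDiffAt_comp_prodAssoc hW) hVt hWt
  rw [lieBracket_prodMk ha21 ha22 ha11 ha12,
    fderiv_prod_apply_eq_smul_deriv_add hUdiff.self_of_nhds,
    fderiv_prod_apply_eq_smul_deriv_add ha11, fderiv_prod_apply_eq_smul_deriv_add ha12,
    fderiv_prod_apply_eq_smul_deriv_add ha21, fderiv_prod_apply_eq_smul_deriv_add ha22] at hbracket
  simp only [smul_eq_mul, ← sub_sub] at hbracket
  refine hbracket.congr_of_eventuallyEq ?_
  filter_upwards [eventually_fderiv_slice_apply_eq hV hn1 (a21 ξ₁ ξ₂) (a22 ξ₁ ξ₂),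
    eventually_fderiv_slice_apply_eq hW hn1 (a11 ξ₁ ξ₂) (a12 ξ₁ ξ₂)] with τ hVτ hWτ
  rw [hVτ, hWτ]
  abel

end

/-- Structural identity of Step 4 of the proof of Theorem 1.
If `V_t = a₁₁ U_{ξ₁} + a₁₂ U_{ξ₂}` and `W_t = a₁₂ U_{ξ₁} + a₂₂ U_{ξ₂}` with
time-independent C¹ coefficients, then
`G = a₂₂ V_{ξ₂} − a₁₂ W_{ξ₂} + a₁₂ V_{ξ₁} − a₁₁ W_{ξ₁}` satisfies
`G_t = (a₁₂ ∂₁a₁₁ + a₂₂ ∂₂a₁₁ − a₁₁ ∂₁a₁₂ − a₁₂ ∂₂a₁₂) U_{ξ₁}`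
`    + (a₁₂ ∂₁a₁₂ + a₂₂ ∂₂a₁₂ − a₁₁ ∂₁a₂₂ − a₁₂ ∂₂a₂₂) U_{ξ₂}`;
in particular all second derivatives of `U` cancel. -/
theorem stmt14 (T : ℝ) (hT : 0 < T)
    (a11 a12 a22 : ℝ → ℝ → ℝ)
    (ha11 : ContDiff ℝ 1 fun p : ℝ × ℝ => a11 p.1 p.2)
    (ha12 : ContDiff ℝ 1 fun p : ℝ × ℝ => a12 p.1 p.2)
    (ha22 : ContDiff ℝ 1 fun p : ℝ × ℝ => a22 p.1 p.2)
    (U V W : ℝ → ℝ → ℝ → ℝ)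
    (hU : ContDiff ℝ 2 fun p : ℝ × ℝ × ℝ => U p.1 p.2.1 p.2.2)
    (hV : ContDiff ℝ 2 fun p : ℝ × ℝ × ℝ => V p.1 p.2.1 p.2.2)
    (hW : ContDiff ℝ 2 fun p : ℝ × ℝ × ℝ => W p.1 p.2.1 p.2.2)
    (heqV : ∀ ξ₁ ξ₂ : ℝ, ∀ t ∈ Icc (0 : ℝ) T,
      deriv (fun τ => V ξ₁ ξ₂ τ) t
        = a11 ξ₁ ξ₂ * deriv (fun s => U s ξ₂ t) ξ₁
          + a12 ξ₁ ξ₂ * deriv (fun s => U ξ₁ s t) ξ₂)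
    (heqW : ∀ ξ₁ ξ₂ : ℝ, ∀ t ∈ Icc (0 : ℝ) T,
      deriv (fun τ => W ξ₁ ξ₂ τ) t
        = a12 ξ₁ ξ₂ * deriv (fun s => U s ξ₂ t) ξ₁
          + a22 ξ₁ ξ₂ * deriv (fun s => U ξ₁ s t) ξ₂) :
    ∀ ξ₁ ξ₂ : ℝ, ∀ t ∈ Icc (0 : ℝ) T,
      deriv (fun τ =>
          a22 ξ₁ ξ₂ * deriv (fun s => V ξ₁ s τ) ξ₂
          - a12 ξ₁ ξ₂ * deriv (fun s => W ξ₁ s τ) ξ₂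
          + a12 ξ₁ ξ₂ * deriv (fun s => V s ξ₂ τ) ξ₁
          - a11 ξ₁ ξ₂ * deriv (fun s => W s ξ₂ τ) ξ₁) t
        = (a12 ξ₁ ξ₂ * deriv (fun s => a11 s ξ₂) ξ₁
            + a22 ξ₁ ξ₂ * deriv (fun s => a11 ξ₁ s) ξ₂
            - a11 ξ₁ ξ₂ * deriv (fun s => a12 s ξ₂) ξ₁
            - a12 ξ₁ ξ₂ * deriv (fun s => a12 ξ₁ s) ξ₂) * deriv (fun s => U s ξ₂ t) ξ₁
          + (a12 ξ₁ ξ₂ * deriv (fun s => a12 s ξ₂) ξ₁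
            + a22 ξ₁ ξ₂ * deriv (fun s => a12 ξ₁ s) ξ₂
            - a11 ξ₁ ξ₂ * deriv (fun s => a22 s ξ₂) ξ₁
            - a12 ξ₁ ξ₂ * deriv (fun s => a22 ξ₁ s) ξ₂) * deriv (fun s => U ξ₁ s t) ξ₂ := by
  intro ξ₁ ξ₂ t ht
  have hUt : ContDiff ℝ 2 fun p : ℝ × ℝ => U p.1 p.2 t :=
    hU.comp (f := fun p : ℝ × ℝ => (p.1, p.2, t)) (by fun_prop)
  have hdiff {a : ℝ × ℝ → ℝ} (ha : ContDiff ℝ 1 a) : DifferentiableAt ℝ a (ξ₁, ξ₂) :=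
    ha.differentiable one_ne_zero (ξ₁, ξ₂)
  exact (stmt14_general minSmoothness_of_isRCLikeNormedField.le (hdiff ha11) (hdiff ha12)
    (hdiff ha12) (hdiff ha22) hUt.contDiffAt hV.contDiffAt hW.contDiffAt
    (.of_forall fun p => heqV p.1 p.2 t ht) (.of_forall fun p => heqW p.1 p.2 t ht)).deriv
end

section
/- Let a₁₁, a₁₂, a₂₂ : ℝ² → ℝ be C¹, and let U, V, W : ℝ² × [0,T] → ℝ be C² with ∂V/∂t = a₁₁ ∂U/∂ξ₁ + a₁₂ ∂U/∂ξ₂, ∂W/∂t = a₁₂ ∂U/∂ξ₁ + a₂₂ ∂U/∂ξ₂, and V(ξ, 0) = W(ξ, 0) = 0 for all ξ ∈ ℝ². Then for all (ξ, t): a₂₂(ξ) ∂V/∂ξ₂(ξ,t) − a₁₂(ξ) ∂W/∂ξ₂(ξ,t) = ∫₀ᵗ [ ( a₁₂ ∂a₁₁/∂ξ₁ + a₂₂ ∂a₁₁/∂ξ₂ − a₁₁ ∂a₁₂/∂ξ₁ − a₁₂ ∂a₁₂/∂ξ₂ )(ξ) ∂U/∂ξ₁(ξ,s) + ( a₁₂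 ∂a₁₂/∂ξ₁ + a₂₂ ∂a₁₂/∂ξ₂ − a₁₁ ∂a₂₂/∂ξ₁ − a₁₂ ∂a₂₂/∂ξ₂ )(ξ) ∂U/∂ξ₂(ξ,s) ] ds − a₁₂(ξ) ∂V/∂ξ₁(ξ,t) + a₁₁(ξ) ∂W/∂ξ₁(ξ,t). -/
open Set

/-!
Write `X = a₁₁ ∂₁ + a₁₂ ∂₂` and `Y = a₁₂ ∂₁ + a₂₂ ∂₂`, so that the system reads `V_t = X U`,
`W_t = Y U`. Time and space derivatives commute, hence `(Y V - X W)_t = Y X U - X Y U = [Y, X] U`,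
and the Lie bracket `[Y, X]` is again a first-order operator. Integrating in time gives the
identity.
-/

open Filter Topology VectorField

section Slices

variable {𝕜 E₁ E₂ E₃ F : Type*} [NontriviallyNormedField 𝕜]
  [NormedAddCommGroup E₁] [NormedSpace 𝕜 E₁] [NormedAddCommGroup E₂] [NormedSpace 𝕜 E₂]
  [NormedAddCommGroup E₃] [NormedSpace 𝕜 E₃] [NormedAddCommGroup F] [NormedSpace 𝕜 F]

theorem contDiff_assoc_left {n : WithTop ℕ∞} {f : E₁ → E₂ → E₃ → F}
    (hf : ContDiff 𝕜 n fun p : E₁ × E₂ × E₃ => f p.1 p.2.1 p.2.2) :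
    ContDiff 𝕜 n fun p : (E₁ × E₂) × E₃ => f p.1.1 p.1.2 p.2 :=
  hf.comp (f := fun p : (E₁ × E₂) × E₃ => (p.1.1, p.1.2, p.2)) (by fun_prop)

theorem fderiv_slice_left {f : E₁ → E₂ → F} {x : E₁} {y : E₂}
    (hf : DifferentiableAt 𝕜 (fun p : E₁ × E₂ => f p.1 p.2) (x, y)) :
    fderiv 𝕜 (fun z => f z y) x =
      fderiv 𝕜 (fun p : E₁ × E₂ => f p.1 p.2) (x, y) ∘L .inl 𝕜 E₁ E₂ :=
  (HasFDerivAt.comp (f := fun z => (z, y)) x hf.hasFDerivAt (hasFDerivAt_prodMk_left x y)).fderiv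

theorem deriv_slice_left {f : 𝕜 → E₂ → F} {x : 𝕜} {y : E₂}
    (hf : DifferentiableAt 𝕜 (fun p : 𝕜 × E₂ => f p.1 p.2) (x, y)) :
    deriv (fun z => f z y) x = fderiv 𝕜 (fun p : 𝕜 × E₂ => f p.1 p.2) (x, y) (1, 0) := by
  rw [← fderiv_apply_one_eq_deriv, fderiv_slice_left hf, ContinuousLinearMap.comp_apply,
    ContinuousLinearMap.inl_apply]

theorem deriv_slice_right {f : E₁ → 𝕜 → F} {x : E₁} {y : 𝕜}
    (hf : DifferentiableAt 𝕜 (fun p : E₁ × 𝕜 => f p.1 p.2) (x, y)) :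
    deriv (f x) y = fderiv 𝕜 (fun p : E₁ × 𝕜 => f p.1 p.2) (x, y) (0, 1) :=
  (hf.hasFDerivAt.comp_hasDerivAt y ((hasDerivAt_const y x).prodMk (hasDerivAt_id y))).deriv

theorem fderiv_apply_eq_smul_deriv_add_smul_deriv {f : 𝕜 → 𝕜 → F} {x y : 𝕜}
    (hf : DifferentiableAt 𝕜 (fun p : 𝕜 × 𝕜 => f p.1 p.2) (x, y)) (a b : 𝕜) :
    fderiv 𝕜 (fun p : 𝕜 × 𝕜 => f p.1 p.2) (x, y) (a, b) =
      a • deriv (fun r => f r y) x + b • deriv (fun r => f x r) y := by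
  rw [deriv_slice_left hf, deriv_slice_right hf, ← map_smul, ← map_smul, ← map_add]
  simp

theorem fderiv_slice_apply_eq_smul_deriv_add_smul_deriv {f : 𝕜 → 𝕜 → E₃ → F}
    (hf : Differentiable 𝕜 fun p : 𝕜 × 𝕜 × E₃ => f p.1 p.2.1 p.2.2) (x y : 𝕜) (z : E₃) (a b : 𝕜) :
    fderiv 𝕜 (fun p : 𝕜 × 𝕜 => f p.1 p.2 z) (x, y) (a, b) =
      a • deriv (fun r => f r y z) x + b • deriv (fun r => f x r z) y :=
  fderiv_apply_eq_smul_deriv_add_smul_deriv (f := fun x y => f x y z)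
    (hf.comp (f := fun p : 𝕜 × 𝕜 => (p.1, p.2, z)) (by fun_prop) (x, y)) a b

theorem lieBracket_prodMk_s15 {a b c d : 𝕜 → 𝕜 → 𝕜} {x y : 𝕜}
    (ha : DifferentiableAt 𝕜 (fun p : 𝕜 × 𝕜 => a p.1 p.2) (x, y))
    (hb : DifferentiableAt 𝕜 (fun p : 𝕜 × 𝕜 => b p.1 p.2) (x, y))
    (hc : DifferentiableAt 𝕜 (fun p : 𝕜 × 𝕜 => c p.1 p.2) (x, y))
    (hd : DifferentiableAt 𝕜 (fun p : 𝕜 × 𝕜 => d p.1 p.2) (x, y)) :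
    lieBracket 𝕜 (fun p : 𝕜 × 𝕜 => (a p.1 p.2, b p.1 p.2))
        (fun p : 𝕜 × 𝕜 => (c p.1 p.2, d p.1 p.2)) (x, y) =
      (a x y * deriv (fun r => c r y) x + b x y * deriv (fun r => c x r) y
          - c x y * deriv (fun r => a r y) x - d x y * deriv (fun r => a x r) y,
        a x y * deriv (fun r => d r y) x + b x y * deriv (fun r => d x r) y
          - c x y * deriv (fun r => b r y) x - d x y * deriv (fun r => b x r) y) := by
  simp only [lieBracket, ha.fderiv_prodMk hb, hc.fderiv_prodMk hd, ContinuousLinearMap.prod_apply,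
    fderiv_apply_eq_smul_deriv_add_smul_deriv, ha, hb, hc, hd, smul_eq_mul, Prod.mk_sub_mk,
    sub_add_eq_sub_sub]

end Slices

section Evolution

variable {𝕜 E F : Type*} [RCLike 𝕜] [NormedAddCommGroup E] [NormedSpace 𝕜 E]
  [NormedAddCommGroup F] [NormedSpace 𝕜 F]

theorem hasDerivAt_fderiv_slice_left {f : E → 𝕜 → F} {x : E} {t : 𝕜}
    (hf : ContDiffAt 𝕜 2 (fun p : E × 𝕜 => f p.1 p.2) (x, t)) :
    HasDerivAt (fun s => fderiv 𝕜 (fun y => f y s) x) (fderiv 𝕜 (fun y => deriv (f y) t) x) t := by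
  set g : E × 𝕜 → F := fun p => f p.1 p.2
  have differentiable_near : ∀ᶠ p in 𝓝 (x, t), DifferentiableAt 𝕜 g p :=
    (hf.eventually (by simp)).mono fun p hp => hp.differentiableAt two_ne_zero
  have second_deriv : HasFDerivAt (fderiv 𝕜 g) (fderiv 𝕜 (fderiv 𝕜 g) (x, t)) (x, t) :=
    ((hf.fderiv_right (m := 1) (by norm_num)).differentiableAt one_ne_zero).hasFDerivAt
  have time_deriv : HasDerivAt (fun s => fderiv 𝕜 (fun y => f y s) x)
      (fderiv 𝕜 (fderiv 𝕜 g) (x, t) (0, 1) ∘L .inl 𝕜 E 𝕜) t := by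
    have along_time := second_deriv.comp_hasDerivAt t
      ((hasDerivAt_const t x).prodMk (hasDerivAt_id t))
    refine (((ContinuousLinearMap.compL 𝕜 E (E × 𝕜) F).flip
      (.inl 𝕜 E 𝕜)).hasFDerivAt.comp_hasDerivAt t along_time).congr_of_eventuallyEq ?_
    exact (((Continuous.prodMk_right x).tendsto t).eventually differentiable_near).mono
      fun s hs => fderiv_slice_left hs
  have space_deriv : HasFDerivAt (fun y => deriv (f y) t)
      ((fderiv 𝕜 (fderiv 𝕜 g) (x, t) ∘L .inl 𝕜 E 𝕜).flip (0, 1)) x := by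
    have along_space := HasFDerivAt.comp (f := fun y => (y, t)) x second_deriv
      (hasFDerivAt_prodMk_left x t)
    refine ((ContinuousLinearMap.apply 𝕜 F ((0, 1) : E × 𝕜)).hasFDerivAt.comp x
      along_space).congr_of_eventuallyEq ?_
    exact (((Continuous.prodMk_left t).tendsto x).eventually differentiable_near).mono
      fun y hy => deriv_slice_right hy
  refine time_deriv.congr_deriv ?_
  ext v
  simpa [space_deriv.fderiv] using (hf.isSymmSndFDerivAt (by simp)).eq (0, 1) (v, 0)

theorem hasDerivAt_fderiv_sub_fderiv_of_deriv_eq {X Y : E → E} {U V W : E → 𝕜 → F} {x : E} {t : 𝕜}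
    (hX : DifferentiableAt 𝕜 X x) (hY : DifferentiableAt 𝕜 Y x)
    (hU : ContDiffAt 𝕜 2 (fun y => U y t) x)
    (hV : ContDiffAt 𝕜 2 (fun p : E × 𝕜 => V p.1 p.2) (x, t))
    (hW : ContDiffAt 𝕜 2 (fun p : E × 𝕜 => W p.1 p.2) (x, t))
    (hVU : ∀ᶠ y in 𝓝 x, deriv (V y) t = fderiv 𝕜 (fun z => U z t) y (X y))
    (hWU : ∀ᶠ y in 𝓝 x, deriv (W y) t = fderiv 𝕜 (fun z => U z t) y (Y y)) :
    HasDerivAt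
      (fun s => fderiv 𝕜 (fun y => V y s) x (Y x) - fderiv 𝕜 (fun y => W y s) x (X x))
      (fderiv 𝕜 (fun y => U y t) x (lieBracket 𝕜 Y X x)) t := by
  have hV_t := hasDerivAt_fderiv_slice_left hV
  have hW_t := hasDerivAt_fderiv_slice_left hW
  rw [EventuallyEq.fderiv_eq hVU] at hV_t
  rw [EventuallyEq.fderiv_eq hWU] at hW_t
  rw [fderiv_apply_lieBracket hU (by simp) hX hY]
  simpa using (hV_t.clm_apply (hasDerivAt_const t (Y x))).fun_sub
    (hW_t.clm_apply (hasDerivAt_const t (X x)))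

end Evolution

theorem stmt15_general {E F : Type*} [NormedAddCommGroup E] [NormedSpace ℝ E]
    [NormedAddCommGroup F] [NormedSpace ℝ F] [CompleteSpace F]
    {X Y : E → E} {U V W : E → ℝ → F} {x : E} {t₀ t : ℝ}
    (hX : DifferentiableAt ℝ X x) (hY : DifferentiableAt ℝ Y x)
    (hU : ∀ s ∈ uIcc t₀ t, ContDiffAt ℝ 2 (fun p : E × ℝ => U p.1 p.2) (x, s))
    (hV : ∀ s ∈ uIcc t₀ t, ContDiffAt ℝ 2 (fun p : E × ℝ => V p.1 p.2) (x, s))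
    (hW : ∀ s ∈ uIcc t₀ t, ContDiffAt ℝ 2 (fun p : E × ℝ => W p.1 p.2) (x, s))
    (hVU : ∀ s ∈ uIcc t₀ t, ∀ᶠ y in 𝓝 x, deriv (V y) s = fderiv ℝ (fun z => U z s) y (X y))
    (hWU : ∀ s ∈ uIcc t₀ t, ∀ᶠ y in 𝓝 x, deriv (W y) s = fderiv ℝ (fun z => U z s) y (Y y)) :
    ∫ s in t₀..t, fderiv ℝ (fun y => U y s) x (lieBracket ℝ Y X x) =
      (fderiv ℝ (fun y => V y t) x (Y x) - fderiv ℝ (fun y => W y t) x (X x)) -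
        (fderiv ℝ (fun y => V y t₀) x (Y x) - fderiv ℝ (fun y => W y t₀) x (X x)) := by
  refine intervalIntegral.integral_eq_sub_of_hasDerivAt
    (f := fun s => fderiv ℝ (fun y => V y s) x (Y x) - fderiv ℝ (fun y => W y s) x (X x))
    (fun s hs => ?_) (ContinuousOn.intervalIntegrable fun s hs => ?_)
  · have hU_slice : ContDiffAt ℝ 2 (fun y => U y s) x :=
      ContDiffAt.comp (g := fun p : E × ℝ => U p.1 p.2) x (hU s hs)
        (contDiff_prodMk_left s).contDiffAt
    exact hasDerivAt_fderiv_sub_fderiv_of_deriv_eq hX hY hU_slice (hV s hs) (hW s hs)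
      (hVU s hs) (hWU s hs)
  · exact ((hasDerivAt_fderiv_slice_left (hU s hs)).continuousAt.clm_apply
      continuousAt_const).continuousWithinAt

/-- Identity (41) in Step 4 of the proof of Theorem 1. Under
`V_t = a₁₁ U_{ξ₁} + a₁₂ U_{ξ₂}`, `W_t = a₁₂ U_{ξ₁} + a₂₂ U_{ξ₂}` with
time-independent C¹ coefficients and zero initial data `V(·,0) = W(·,0) = 0`,
one has
`a₂₂ V_{ξ₂} − a₁₂ W_{ξ₂} = ∫₀ᵗ (c₁ U_{ξ₁} + c₂ U_{ξ₂}) ds − a₁₂ V_{ξ₁} + a₁₁ W_{ξ₁}`,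
with `c₁ = a₁₂ ∂₁a₁₁ + a₂₂ ∂₂a₁₁ − a₁₁ ∂₁a₁₂ − a₁₂ ∂₂a₁₂` and
`c₂ = a₁₂ ∂₁a₁₂ + a₂₂ ∂₂a₁₂ − a₁₁ ∂₁a₂₂ − a₁₂ ∂₂a₂₂`. -/
theorem stmt15 (T : ℝ) (hT : 0 < T)
    (a11 a12 a22 : ℝ → ℝ → ℝ)
    (ha11 : ContDiff ℝ 1 fun p : ℝ × ℝ => a11 p.1 p.2)
    (ha12 : ContDiff ℝ 1 fun p : ℝ × ℝ => a12 p.1 p.2)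
    (ha22 : ContDiff ℝ 1 fun p : ℝ × ℝ => a22 p.1 p.2)
    (U V W : ℝ → ℝ → ℝ → ℝ)
    (hU : ContDiff ℝ 2 fun p : ℝ × ℝ × ℝ => U p.1 p.2.1 p.2.2)
    (hV : ContDiff ℝ 2 fun p : ℝ × ℝ × ℝ => V p.1 p.2.1 p.2.2)
    (hW : ContDiff ℝ 2 fun p : ℝ × ℝ × ℝ => W p.1 p.2.1 p.2.2)
    (heqV : ∀ ξ₁ ξ₂ : ℝ, ∀ t ∈ Icc (0 : ℝ) T,
      deriv (fun τ => V ξ₁ ξ₂ τ) t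
        = a11 ξ₁ ξ₂ * deriv (fun s => U s ξ₂ t) ξ₁
          + a12 ξ₁ ξ₂ * deriv (fun s => U ξ₁ s t) ξ₂)
    (heqW : ∀ ξ₁ ξ₂ : ℝ, ∀ t ∈ Icc (0 : ℝ) T,
      deriv (fun τ => W ξ₁ ξ₂ τ) t
        = a12 ξ₁ ξ₂ * deriv (fun s => U s ξ₂ t) ξ₁
          + a22 ξ₁ ξ₂ * deriv (fun s => U ξ₁ s t) ξ₂)
    (hV0 : ∀ ξ₁ ξ₂ : ℝ, V ξ₁ ξ₂ 0 = 0)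
    (hW0 : ∀ ξ₁ ξ₂ : ℝ, W ξ₁ ξ₂ 0 = 0) :
    ∀ ξ₁ ξ₂ : ℝ, ∀ t ∈ Icc (0 : ℝ) T,
      a22 ξ₁ ξ₂ * deriv (fun s => V ξ₁ s t) ξ₂
          - a12 ξ₁ ξ₂ * deriv (fun s => W ξ₁ s t) ξ₂
        = (∫ s in (0 : ℝ)..t,
            ((a12 ξ₁ ξ₂ * deriv (fun r => a11 r ξ₂) ξ₁
              + a22 ξ₁ ξ₂ * deriv (fun r => a11 ξ₁ r) ξ₂
              - a11 ξ₁ ξ₂ * deriv (fun r => a12 r ξ₂) ξ₁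
              - a12 ξ₁ ξ₂ * deriv (fun r => a12 ξ₁ r) ξ₂) * deriv (fun r => U r ξ₂ s) ξ₁
            + (a12 ξ₁ ξ₂ * deriv (fun r => a12 r ξ₂) ξ₁
              + a22 ξ₁ ξ₂ * deriv (fun r => a12 ξ₁ r) ξ₂
              - a11 ξ₁ ξ₂ * deriv (fun r => a22 r ξ₂) ξ₁
              - a12 ξ₁ ξ₂ * deriv (fun r => a22 ξ₁ r) ξ₂) * deriv (fun r => U ξ₁ r s) ξ₂))
          - a12 ξ₁ ξ₂ * deriv (fun s => V s ξ₂ t) ξ₁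
          + a11 ξ₁ ξ₂ * deriv (fun s => W s ξ₂ t) ξ₁ := by
  intro x y t ht
  have mem_Icc : ∀ s ∈ uIcc 0 t, s ∈ Icc 0 T := fun s hs =>
    Icc_subset_Icc_right ht.2 (uIcc_of_le ht.1 ▸ hs)
  have da11 := ha11.differentiable one_ne_zero (x, y)
  have da12 := ha12.differentiable one_ne_zero (x, y)
  have da22 := ha22.differentiable one_ne_zero (x, y)
  have gradU := fderiv_slice_apply_eq_smul_deriv_add_smul_deriv (hU.differentiable two_ne_zero)
  have gradV := fderiv_slice_apply_eq_smul_deriv_add_smul_deriv (hV.differentiable two_ne_zero)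
  have gradW := fderiv_slice_apply_eq_smul_deriv_add_smul_deriv (hW.differentiable two_ne_zero)
  have integrated := stmt15_general (t₀ := 0) (t := t) (da11.prodMk da12) (da12.prodMk da22)
    (fun _ _ => (contDiff_assoc_left hU).contDiffAt)
    (fun _ _ => (contDiff_assoc_left hV).contDiffAt)
    (fun _ _ => (contDiff_assoc_left hW).contDiffAt)
    (fun s hs => .of_forall fun p =>
      (heqV p.1 p.2 s (mem_Icc s hs)).trans (gradU p.1 p.2 s _ _).symm)
    (fun s hs => .of_forall fun p =>
      (heqW p.1 p.2 s (mem_Icc s hs)).trans (gradU p.1 p.2 s _ _).symm)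
  simp only [lieBracket_prodMk_s15 da12 da22 da11 da12, gradU, gradV, gradW, hV0, hW0,
    fderiv_fun_const, Pi.zero_apply, zero_apply, smul_eq_mul] at integrated
  linarith
end
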